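/- Let Λ = Hom(M_amb, ℝ_{>0}) where X* is a finitely generated free abelian group (written multiplicatively via characters), and let C ⊂ Λ = Hom(X*, ℝ_{>0}) be a strictly convex rational polyhedral cone, with M = {χ ∈ X* : ⟨χ,u⟩ ≤ 1 for all u ∈ C} the associated semigroup. Then the canonical map C → Hom_Mon(M, (0,1]), u ↦ (χ ↦ ⟨χ,u⟩), is a bijection onto the set of monoid homomorphisms from (M,·,1) to ((0,1],·,1), and the space C̄ = Hom_Mon(M,[0,1]) (with the topology of pointwise convergence) is compact and contains the image of C as a dense subset. -/

import Mathlib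

lemma prod_exp_zpow_aux {n : ℕ} (v : Fin n → ℝ) (χ : Fin n → ℤ) :
    (∏ i, Real.exp (v i) ^ χ i) = Real.exp (∑ i, (χ i : ℝ) * v i) := by
  rw [Real.exp_sum]
  refine Finset.prod_congr rfl fun i _ => ?_
  rw [mul_comm, Real.exp_mul, Real.rpow_intCast]

lemma hom_sum_nsmul_aux {P ι : Type*} [AddCommMonoid P] (f : P → ℝ) (h0 : f 0 = 1)
    (hadd : ∀ a b, f (a + b) = f a * f b) (s : Finset ι) (k : ι → ℕ) (x : ι → P) :
    f (∑ i ∈ s, k i • x i) = ∏ i ∈ s, f (x i) ^ k i := by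
  let F : Multiplicative P →* ℝ :=
    { toFun := fun a => f a.toAdd, map_one' := h0, map_mul' := fun a b => hadd _ _ }
  have hk : ∀ (m : ℕ) (a : P), f (m • a) = f a ^ m := fun m a =>
    map_pow F (Multiplicative.ofAdd a) m
  classical
  induction s using Finset.induction_on with
  | empty => simpa using h0
  | insert a s ha ih => rw [Finset.sum_insert ha, Finset.prod_insert ha, hadd, ih, hk]

/-- Surjectivity: a positive hom on a generating submonoid comes from a point. -/
lemma surj_aux {n : ℕ} (Msub : AddSubmonoid (Fin n → ℤ))
    (hgen : ∀ χ : Fin n → ℤ, ∃ χ₁ ∈ Msub, ∃ χ₂ ∈ Msub, χ = χ₁ - χ₂)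
    (f : ↥Msub → ℝ) (hf : ∀ χ, 0 < f χ) (h0 : f 0 = 1)
    (hadd : ∀ a b : ↥Msub, f (a + b) = f a * f b) :
    ∃ v : Fin n → ℝ, ∀ χ : ↥Msub,
      f χ = Real.exp (∑ i, (((χ : Fin n → ℤ) i : ℤ) : ℝ) * v i) := by
  choose p hp q hq hpq using fun i : Fin n => hgen (Pi.single i 1)
  let P : Fin n → ↥Msub := fun i => ⟨p i, hp i⟩
  let Q : Fin n → ↥Msub := fun i => ⟨q i, hq i⟩
  refine ⟨fun i => Real.log (f (P i)) - Real.log (f (Q i)), fun χ => ?_⟩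
  let c : Fin n → ℤ := χ
  have key : χ + (∑ i, (c i).toNat • Q i + ∑ i, (-c i).toNat • P i)
      = ∑ i, (c i).toNat • P i + ∑ i, (-c i).toNat • Q i := by
    apply Subtype.ext
    have h1 : (χ : Fin n → ℤ) = ∑ i, c i • (p i - q i) := by
      simp_rw [← hpq]
      funext j
      simp [Finset.sum_apply, Pi.single_apply, c]
    push_cast
    rw [h1, ← sub_eq_zero, ← Finset.sum_add_distrib, ← Finset.sum_add_distrib,
      ← Finset.sum_add_distrib, ← Finset.sum_sub_distrib]
    refine Finset.sum_eq_zero fun i _ => ?_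
    have h2 : c i = ((c i).toNat : ℤ) - ((-c i).toNat : ℤ) := by omega
    conv_lhs => enter [1, 1, 1]; rw [h2]
    simp only [P, Q, ← natCast_zsmul]
    module
  have h3 := congrArg f key
  simp only [hadd, hom_sum_nsmul_aux f h0 hadd] at h3
  have h4 := congrArg Real.log h3
  have hpp : ∀ (k : Fin n → ℕ) (R : Fin n → ↥Msub), (∏ i, f (R i) ^ k i) ≠ 0 := fun k R =>
    Finset.prod_ne_zero_iff.2 fun i _ => pow_ne_zero _ (hf _).ne'
  have hlp : ∀ (k : Fin n → ℕ) (R : Fin n → ↥Msub), Real.log (∏ i, f (R i) ^ k i)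
      = ∑ i, (k i : ℝ) * Real.log (f (R i)) := fun k R => by
    rw [Real.log_prod (fun i _ => pow_ne_zero _ (hf _).ne')]
    simp
  rw [Real.log_mul (hf _).ne' (mul_ne_zero (hpp _ _) (hpp _ _)), Real.log_mul (hpp _ _) (hpp _ _),
    Real.log_mul (hpp _ _) (hpp _ _)] at h4
  simp only [hlp] at h4
  rw [← Real.exp_log (hf χ)]
  congr 1
  have h5 : ∑ i, (c i : ℝ) * (Real.log (f (P i)) - Real.log (f (Q i)))
      = ∑ i, ((c i).toNat : ℝ) * Real.log (f (P i)) + ∑ i, ((-c i).toNat : ℝ) * Real.log (f (Q i))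
       - (∑ i, ((c i).toNat : ℝ) * Real.log (f (Q i))
        + ∑ i, ((-c i).toNat : ℝ) * Real.log (f (P i))) := by
    rw [← Finset.sum_add_distrib, ← Finset.sum_add_distrib, ← Finset.sum_sub_distrib]
    refine Finset.sum_congr rfl fun i _ => ?_
    have h2 : c i = ((c i).toNat : ℤ) - ((-c i).toNat : ℤ) := by omega
    have h2' : (c i : ℝ) = ((c i).toNat : ℝ) - ((-c i).toNat : ℝ) := by exact_mod_cast h2
    rw [h2']
    ring
  change _ = ∑ i, (c i : ℝ) * (Real.log (f (P i)) - Real.log (f (Q i)))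
  rw [h5]
  linarith

/-- The combinatorial obstruction used against a separating functional. -/
lemma obstruction_aux {P ι : Type*} [AddCommGroup P] [Fintype ι] (M : AddSubmonoid P)
    (f : M → ℝ) (hf : ∀ χ, f χ ∈ Set.Icc (0 : ℝ) 1) (h0 : f 0 = 1)
    (hadd : ∀ a b, f (a + b) = f a * f b) (x : ι → M) (m : ι → ℤ)
    (hm : -∑ i, m i • (x i : P) ∈ M)
    (hm0 : ∀ i, f (x i) = 0 → 0 ≤ m i) :
    (∀ i, f (x i) = 0 → m i = 0) ∧ 0 ≤ ∑ i, (m i : ℝ) * Real.log (f (x i)) := by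
  let w : M := ⟨_, hm⟩
  have key : w + ∑ i, (m i).toNat • x i = ∑ i, (-m i).toNat • x i := by
    apply Subtype.ext
    push_cast
    rw [← sub_eq_zero]
    simp only [w]
    rw [← Finset.sum_neg_distrib, ← Finset.sum_add_distrib, ← Finset.sum_sub_distrib]
    refine Finset.sum_eq_zero fun i _ => ?_
    have h2 : m i = ((m i).toNat : ℤ) - ((-m i).toNat : ℤ) := by omega
    conv_lhs => enter [1, 1, 1]; rw [h2]
    simp only [← natCast_zsmul]
    module
  have h3 := congrArg f key
  simp only [hadd, hom_sum_nsmul_aux f h0 hadd] at h3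
  have hR : ∀ i ∈ Finset.univ, f (x i) ^ (-m i).toNat ≠ 0 := by
    intro i _
    by_cases hi : f (x i) = 0
    · have := hm0 i hi
      have h : (-m i).toNat = 0 := by omega
      simp [h]
    · exact pow_ne_zero _ hi
  have hR' := Finset.prod_ne_zero_iff.2 hR
  have hL' : (∏ i, f (x i) ^ (m i).toNat) ≠ 0 := by
    intro h
    rw [h, mul_zero] at h3
    exact hR' h3.symm
  have hL := Finset.prod_ne_zero_iff.1 hL'
  refine ⟨fun i hi => ?_, ?_⟩
  · by_contra hne
    have := hm0 i hi
    have h : (m i).toNat ≠ 0 := by omega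
    apply hL i (Finset.mem_univ i)
    rw [hi, zero_pow h]
  · have hLpos : 0 ≤ ∏ i, f (x i) ^ (m i).toNat :=
      Finset.prod_nonneg fun i _ => pow_nonneg (hf _).1 _
    have hRpos : 0 < ∏ i, f (x i) ^ (-m i).toNat :=
      lt_of_le_of_ne (Finset.prod_nonneg fun i _ => pow_nonneg (hf _).1 _) hR'.symm
    have hle : ∏ i, f (x i) ^ (-m i).toNat ≤ ∏ i, f (x i) ^ (m i).toNat := by
      rw [← h3]
      exact mul_le_of_le_one_left hLpos (hf w).2
    have hlog := Real.log_le_log hRpos hle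
    rw [Real.log_prod hR, Real.log_prod hL, ← sub_nonneg, ← Finset.sum_sub_distrib] at hlog
    refine hlog.trans_eq (Finset.sum_congr rfl fun i _ => ?_)
    have h2 : m i = ((m i).toNat : ℤ) - ((-m i).toNat : ℤ) := by omega
    have h2' : (m i : ℝ) = ((m i).toNat : ℝ) - ((-m i).toNat : ℝ) := by exact_mod_cast h2
    rw [h2', Real.log_pow, Real.log_pow]
    ring

/-- Density, for finitely many test characters. -/
lemma density_aux {n : ℕ} {ι : Type*} [Fintype ι] (Msub : AddSubmonoid (Fin n → ℤ))
    (hM : ∀ χ : Fin n → ℤ, (∀ v : Fin n → ℝ, (∀ ψ ∈ Msub, ∑ j, (ψ j : ℝ) * v j ≤ 0) →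
      ∑ j, (χ j : ℝ) * v j ≤ 0) → χ ∈ Msub)
    (f : ↥Msub → ℝ) (hf : ∀ χ, f χ ∈ Set.Icc (0 : ℝ) 1) (h0 : f 0 = 1)
    (hadd : ∀ a b, f (a + b) = f a * f b) (x : ι → Msub) (U : ι → Set ℝ)
    (hU : ∀ i, IsOpen (U i)) (hfU : ∀ i, f (x i) ∈ U i) :
    ∃ v : Fin n → ℝ, (∀ ψ ∈ Msub, ∑ j, (ψ j : ℝ) * v j ≤ 0) ∧
      ∀ i, Real.exp (∑ j, (((x i : Fin n → ℤ) j : ℤ) : ℝ) * v j) ∈ U i := by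
  classical
  choose ε hε hball using fun i => Metric.isOpen_iff.1 (hU i) _ (hfU i)
  let B : Set (ι → ℝ) := Set.univ.pi fun i => Real.exp ⁻¹' (Metric.ball (f (x i)) (ε i))
  let L : (Fin n → ℝ) →ₗ[ℝ] (ι → ℝ) :=
    { toFun := fun v i => ∑ j, (((x i : Fin n → ℤ) j : ℤ) : ℝ) * v j
      map_add' := fun v w => by
        funext i
        simp [mul_add, Finset.sum_add_distrib]
      map_smul' := fun c v => by
        funext i
        simp only [Pi.smul_apply, smul_eq_mul, RingHom.id_apply, Finset.mul_sum]
        exact Finset.sum_congr rfl fun j _ => by ring }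
  let K : Set (Fin n → ℝ) := {v | ∀ ψ ∈ Msub, ∑ j, (ψ j : ℝ) * v j ≤ 0}
  have hKsmul : ∀ c : ℝ, 0 ≤ c → ∀ v ∈ K, c • v ∈ K := by
    intro c hc v hv ψ hψ
    have : ∑ j, (ψ j : ℝ) * (c • v) j = c * ∑ j, (ψ j : ℝ) * v j := by
      rw [Finset.mul_sum]
      exact Finset.sum_congr rfl fun j _ => by simp only [Pi.smul_apply, smul_eq_mul]; ring
    rw [this]
    exact mul_nonpos_of_nonneg_of_nonpos hc (hv ψ hψ)
  have hKadd : ∀ v ∈ K, ∀ w ∈ K, v + w ∈ K := by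
    intro v hv w hw ψ hψ
    have := add_nonpos (hv ψ hψ) (hw ψ hψ)
    simpa [mul_add, Finset.sum_add_distrib] using this
  have hKconv : Convex ℝ K := fun v hv w hw a b ha hb _ =>
    hKadd _ (hKsmul a ha v hv) _ (hKsmul b hb w hw)
  have hK0 : (0 : Fin n → ℝ) ∈ K := fun ψ _ => by simp
  have hBopen : IsOpen B := isOpen_set_pi Set.finite_univ fun i _ =>
    Metric.isOpen_ball.preimage Real.continuous_exp
  have hBconv : Convex ℝ B := convex_pi fun i _ => by
    apply Set.OrdConnected.convex
    rw [Real.ball_eq_Ioo]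
    exact Set.ordConnected_Ioo.preimage_mono Real.exp_monotone
  by_contra hcon
  have hdisj : Disjoint B (L '' K) := by
    rw [Set.disjoint_left]
    rintro _ hy ⟨v, hv, rfl⟩
    exact hcon ⟨v, hv, fun i => hball i (hy i trivial)⟩
  obtain ⟨φ, s, hφB, hφA⟩ := geometric_hahn_banach_open hBconv hBopen
    (hKconv.linear_image L) hdisj
  have hs : s ≤ 0 := by simpa using hφA (L 0) ⟨0, hK0, rfl⟩
  have hφK : ∀ v ∈ K, 0 ≤ φ (L v) := by
    intro v hv
    by_contra! hneg
    let t := (1 - s) / (-φ (L v))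
    have ht : 0 ≤ t := div_nonneg (by linarith) (by linarith)
    have h := hφA (L (t • v)) ⟨_, hKsmul t ht v hv, rfl⟩
    rw [map_smul, map_smul, smul_eq_mul] at h
    have h2 : t * φ (L v) = -(1 - s) := by
      have : φ (L v) ≠ 0 := hneg.ne
      simp only [t]
      field_simp
    linarith
  let lam : ι → ℝ := fun i => φ (Pi.single i 1)
  have hφ : ∀ y : ι → ℝ, φ y = ∑ i, lam i * y i := by
    intro y
    conv_lhs => rw [pi_eq_sum_univ' y]
    rw [map_sum]
    refine Finset.sum_congr rfl fun i _ => ?_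
    rw [map_smul, smul_eq_mul, mul_comm]
  -- base point
  let y0 : ι → ℝ := fun i => if f (x i) = 0 then Real.log (ε i / 2) else Real.log (f (x i))
  have hlow : ∀ i, f (x i) = 0 → ∀ r ≤ Real.log (ε i / 2),
      Real.exp r ∈ Metric.ball (f (x i)) (ε i) := by
    intro i hi r hr
    have h1 : Real.exp r ≤ ε i / 2 := by
      rw [← Real.exp_log (half_pos (hε i))]
      exact Real.exp_le_exp.2 hr
    rw [hi, Metric.mem_ball, Real.dist_eq, sub_zero, abs_of_pos (Real.exp_pos _)]
    linarith [hε i]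
  have hy0 : y0 ∈ B := by
    intro i _
    by_cases hi : f (x i) = 0
    · simp only [Set.mem_preimage, y0, if_pos hi]
      exact hlow i hi _ le_rfl
    · simp only [Set.mem_preimage, y0, if_neg hi]
      rw [Real.exp_log (lt_of_le_of_ne (hf _).1 (Ne.symm hi))]
      exact Metric.mem_ball_self (hε i)
  have hlam0 : ∀ i, f (x i) = 0 → 0 ≤ lam i := by
    intro i hi
    by_contra! hneg
    have hB : ∀ t : ℝ, 0 ≤ t → y0 - t • Pi.single i (1 : ℝ) ∈ B := by
      intro t ht j _
      by_cases hij : j = i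
      · subst hij
        simp only [Set.mem_preimage, Pi.sub_apply, Pi.smul_apply, Pi.single_eq_same, smul_eq_mul,
          mul_one]
        apply hlow j hi
        simp only [y0, if_pos hi]
        linarith
      · have := hy0 j trivial
        simpa [Pi.single_eq_of_ne hij] using this
    let t := |φ y0| / (-lam i)
    have ht : 0 ≤ t := div_nonneg (abs_nonneg _) (by linarith)
    have h := hφB _ (hB t ht)
    rw [map_sub, map_smul, smul_eq_mul] at h
    change φ y0 - t * lam i < s at h
    have h2 : t * lam i = -|φ y0| := by
      have : lam i ≠ 0 := hneg.ne
      simp only [t]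
      field_simp
    have := neg_abs_le (φ y0)
    linarith
  -- integral approximation
  have hmem : ∀ N : ℕ, -∑ i, ⌊(N : ℝ) * lam i⌋ • (x i : Fin n → ℤ) ∈ Msub := by
    intro N
    apply hM
    intro v hv
    have h1 := hφK v hv
    rw [hφ] at h1
    have h2 : ∑ j, (((-∑ i, ⌊(N : ℝ) * lam i⌋ • (x i : Fin n → ℤ)) j : ℤ) : ℝ) * v j
        = -∑ i, (⌊(N : ℝ) * lam i⌋ : ℝ) * L v i := by
      simp only [L, LinearMap.coe_mk, AddHom.coe_mk, Finset.mul_sum]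
      rw [Finset.sum_comm, ← Finset.sum_neg_distrib (f := fun j : Fin n => _)]
      refine Finset.sum_congr rfl fun j _ => ?_
      simp only [Pi.neg_apply, Finset.sum_apply, Pi.smul_apply, smul_eq_mul]
      push_cast
      rw [neg_mul, Finset.sum_mul]
      congr 1
      exact Finset.sum_congr rfl fun i _ => by ring
    rw [h2, neg_nonpos]
    have h3 : 0 ≤ (N : ℝ) * ∑ i, lam i * L v i := mul_nonneg (Nat.cast_nonneg _) h1
    refine h3.trans ?_
    rw [Finset.mul_sum]
    refine Finset.sum_le_sum fun i _ => ?_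
    rw [← mul_assoc]
    exact mul_le_mul_of_nonpos_right (Int.floor_le _) (hv _ (x i).2)
  have hob := fun N : ℕ => obstruction_aux Msub f hf h0 hadd x
    (fun i => ⌊(N : ℝ) * lam i⌋) (hmem N)
    (fun i hi => Int.floor_nonneg.2 (mul_nonneg (Nat.cast_nonneg _) (hlam0 i hi)))
  have hlamz : ∀ i, f (x i) = 0 → lam i = 0 := by
    intro i hi
    by_contra hne
    have hp : 0 < lam i := lt_of_le_of_ne (hlam0 i hi) (Ne.symm hne)
    obtain ⟨N, hN⟩ := exists_nat_gt (1 / lam i)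
    have h1 := (hob N).1 i hi
    rw [div_lt_iff₀ hp] at hN
    have h2 : 1 ≤ ⌊(N : ℝ) * lam i⌋ := Int.le_floor.2 (by push_cast; exact hN.le)
    omega
  have hneg : ∑ i, lam i * Real.log (f (x i)) < 0 := by
    have h1 := hφB _ hy0
    rw [hφ] at h1
    refine lt_of_le_of_lt (le_of_eq (Finset.sum_congr rfl fun i _ => ?_)) (h1.trans_le hs)
    by_cases hi : f (x i) = 0
    · simp [hlamz i hi]
    · simp [y0, hi]
  have hbound : ∀ N : ℕ, 0 ≤ (N : ℝ) * ∑ i, lam i * Real.log (f (x i))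
      - ∑ i, Real.log (f (x i)) := by
    intro N
    refine (hob N).2.trans ?_
    rw [Finset.mul_sum, ← Finset.sum_sub_distrib]
    refine Finset.sum_le_sum fun i _ => ?_
    have hl : Real.log (f (x i)) ≤ 0 := Real.log_nonpos (hf _).1 (hf _).2
    have hfl := (Int.sub_one_lt_floor ((N : ℝ) * lam i)).le
    have := mul_le_mul_of_nonpos_right hfl hl
    linarith
  obtain ⟨N, hN⟩ := exists_nat_gt
    ((∑ i, Real.log (f (x i))) / (∑ i, lam i * Real.log (f (x i))))
  rw [div_lt_iff_of_neg hneg] at hN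
  linarith [hbound N]

/-- let `C ⊂ Λ = Hom(X*, ℝ_{>0})` be a strictly convex rational polyhedral cone
(here `X* = ℤⁿ`, a point `u ∈ Λ` is identified with its tuple of positive values on the standard
basis, and the pairing is `⟨χ,u⟩ = ∏ᵢ uᵢ^{χᵢ}`), with associated semigroup
`M = {χ : ⟨χ,u⟩ ≤ 1 for all u ∈ C}`; strict convexity is encoded by `M - M = X*`, and
polyhedrality by the biduality `C = {u > 0 : ⟨χ,u⟩ ≤ 1 ∀ χ ∈ M}`. Then the canonical map
`Θ : u ↦ (χ ↦ ⟨χ,u⟩)` is a bijection of `C` onto the set of monoid homomorphisms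
`Hom_Mon(M, (0,1])`, and `C̄ = Hom_Mon(M, [0,1])` (with the topology of pointwise convergence)
is compact and contains the image of `C` as a dense subset. -/
theorem cone_compactification_hom_monoid
    (n : ℕ) (C : Set (Fin n → ℝ))
    (hpos : ∀ u ∈ C, ∀ i, 0 < u i)
    (Msub : AddSubmonoid (Fin n → ℤ))
    (hM : ∀ χ : Fin n → ℤ, χ ∈ Msub ↔ ∀ u ∈ C, (∏ i, u i ^ χ i) ≤ 1)
    (hCdual : ∀ u : Fin n → ℝ,
      u ∈ C ↔ ((∀ i, 0 < u i) ∧ ∀ χ ∈ Msub, (∏ i, u i ^ χ i) ≤ 1))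
    (hgen : ∀ χ : Fin n → ℤ, ∃ χ₁ ∈ Msub, ∃ χ₂ ∈ Msub, χ = χ₁ - χ₂)
    (Θ : (Fin n → ℝ) → (↥Msub → ℝ))
    (hΘ : ∀ u, ∀ χ : ↥Msub, Θ u χ = ∏ i, u i ^ (χ : Fin n → ℤ) i) :
    Set.BijOn Θ C
      {f : ↥Msub → ℝ | (∀ χ, f χ ∈ Set.Ioc (0 : ℝ) 1) ∧ f 0 = 1 ∧
        ∀ a b : ↥Msub, f (a + b) = f a * f b} ∧
    IsCompact {f : ↥Msub → ℝ | (∀ χ, f χ ∈ Set.Icc (0 : ℝ) 1) ∧ f 0 = 1 ∧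
        ∀ a b : ↥Msub, f (a + b) = f a * f b} ∧
    Θ '' C ⊆ {f : ↥Msub → ℝ | (∀ χ, f χ ∈ Set.Icc (0 : ℝ) 1) ∧ f 0 = 1 ∧
        ∀ a b : ↥Msub, f (a + b) = f a * f b} ∧
    {f : ↥Msub → ℝ | (∀ χ, f χ ∈ Set.Icc (0 : ℝ) 1) ∧ f 0 = 1 ∧
        ∀ a b : ↥Msub, f (a + b) = f a * f b} ⊆ closure (Θ '' C) := by
  classical
  have hlogC : ∀ v : Fin n → ℝ, (fun i => Real.exp (v i)) ∈ C ↔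
      ∀ ψ ∈ Msub, ∑ j, (ψ j : ℝ) * v j ≤ 0 := by
    intro v
    rw [hCdual]
    simp only [prod_exp_zpow_aux, Real.exp_le_one_iff]
    exact ⟨fun h => h.2, fun h => ⟨fun i => Real.exp_pos _, h⟩⟩
  have hΘexp : ∀ (v : Fin n → ℝ) (χ : ↥Msub), Θ (fun i => Real.exp (v i)) χ
      = Real.exp (∑ j, (((χ : Fin n → ℤ) j : ℤ) : ℝ) * v j) := by
    intro v χ
    rw [hΘ, prod_exp_zpow_aux]
  have hmaps : Set.MapsTo Θ C {f : ↥Msub → ℝ | (∀ χ, f χ ∈ Set.Ioc (0 : ℝ) 1) ∧ f 0 = 1 ∧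
        ∀ a b : ↥Msub, f (a + b) = f a * f b} := by
    intro u hu
    refine ⟨fun χ => ?_, ?_, fun a b => ?_⟩
    · rw [hΘ]
      exact ⟨Finset.prod_pos fun i _ => zpow_pos (hpos u hu i) _, (hM χ).1 χ.2 u hu⟩
    · rw [hΘ]
      simp
    · rw [hΘ, hΘ, hΘ, ← Finset.prod_mul_distrib]
      refine Finset.prod_congr rfl fun i _ => ?_
      rw [← zpow_add₀ (hpos u hu i).ne']
      simp
  have hsub : Θ '' C ⊆ {f : ↥Msub → ℝ | (∀ χ, f χ ∈ Set.Icc (0 : ℝ) 1) ∧ f 0 = 1 ∧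
        ∀ a b : ↥Msub, f (a + b) = f a * f b} := by
    rintro _ ⟨u, hu, rfl⟩
    obtain ⟨h1, h2, h3⟩ := hmaps hu
    exact ⟨fun χ => ⟨(h1 χ).1.le, (h1 χ).2⟩, h2, h3⟩
  refine ⟨⟨hmaps, ?_, ?_⟩, ?_, hsub, ?_⟩
  · intro u hu u' hu' h
    funext i
    obtain ⟨a, ha, b, hb, hab⟩ := hgen (Pi.single i 1)
    have hval : ∀ w ∈ C, w i = Θ w ⟨a, ha⟩ / Θ w ⟨b, hb⟩ := by
      intro w hw
      rw [hΘ, hΘ, ← Finset.prod_div_distrib]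
      have : ∀ j, w j ^ a j / w j ^ b j = w j ^ (Pi.single i (1 : ℤ) : Fin n → ℤ) j := by
        intro j
        rw [← zpow_sub₀ (hpos w hw j).ne', hab, Pi.sub_apply]
      simp only [this]
      rw [Finset.prod_eq_single i]
      · simp
      · intro j _ hj
        simp [Pi.single_eq_of_ne hj]
      · simp
    rw [hval u hu, hval u' hu', h]
  · rintro f ⟨hf, h0, hadd⟩
    obtain ⟨v, hv⟩ := surj_aux Msub hgen f (fun χ => (hf χ).1) h0 hadd
    refine ⟨fun i => Real.exp (v i), ?_, ?_⟩
    · rw [hlogC]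
      intro ψ hψ
      have h := (hf ⟨ψ, hψ⟩).2
      rwa [hv, Real.exp_le_one_iff] at h
    · funext χ
      rw [hΘexp, hv]
  · refine (isCompact_univ_pi (fun _ : ↥Msub => isCompact_Icc (a := (0 : ℝ)) (b := 1))).of_isClosed_subset
      ?_ (fun f hf χ _ => hf.1 χ)
    simp only [Set.ofPred_and, Set.ofPred_forall]
    refine (isClosed_iInter fun χ => isClosed_Icc.preimage (continuous_apply χ)).inter
      ((isClosed_eq (continuous_apply _) continuous_const).inter ?_)
    exact isClosed_iInter fun a => isClosed_iInter fun b =>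
      isClosed_eq (continuous_apply _) (by fun_prop)
  · rintro f ⟨hf, h0, hadd⟩
    rw [mem_closure_iff]
    intro o ho hfo
    obtain ⟨I, U, hU, hIU⟩ := isOpen_pi_iff.1 ho f hfo
    obtain ⟨v, hvC, hvU⟩ := density_aux (ι := I) Msub (by
        intro χ h
        rw [hM]
        intro u hu
        have hu' : u = fun i => Real.exp (Real.log (u i)) := by
          funext i
          rw [Real.exp_log (hpos u hu i)]
        rw [hu'] at hu ⊢
        rw [prod_exp_zpow_aux, Real.exp_le_one_iff]
        exact h _ ((hlogC _).1 hu)) f hf h0 hadd (fun i => i.1) (fun i => U i.1)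
      (fun i => (hU i.1 i.2).1) (fun i => (hU i.1 i.2).2)
    refine ⟨Θ fun i => Real.exp (v i), hIU fun i hi => ?_, _, (hlogC v).2 hvC, rfl⟩
    rw [hΘexp]
    exact hvU ⟨i, hi⟩
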